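/- Let ω be a weight on ℝ^d (continuous, symmetric, nonnegative, submultiplicative), let μ be ω-moderate, and let Φ = (φ_1,…,φ_r) with each φ_i ∈ W^1_ω. If the synthesis operator S_Φ has ℓ^p_μ-stability for some p ∈ [1,∞], then S_Φ has ℓ^q_μ-stability for every q ∈ [1,∞]. -/

import Mathlib

open MeasureTheory Filter Topology ENNReal Real Matrix

noncomputable section

variable {d : ℕ}

/-- embedding of `ℤ^d` into `ℝ^d` -/
def zc (j : Fin d → ℤ) : Fin d → ℝ := fun i => (j i : ℝ)

/-- weighted `ℓ^p_ν` norm of a sequence on `ℤ^d` -/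
def lpW (p : ℝ≥0∞) (ν : (Fin d → ℝ) → ℝ) (c : (Fin d → ℤ) → ℂ) : ℝ≥0∞ :=
  if p = ∞ then ⨆ j, (‖c j‖₊ : ℝ≥0∞) * ENNReal.ofReal (ν (zc j))
  else (∑' j, ((‖c j‖₊ : ℝ≥0∞) * ENNReal.ofReal (ν (zc j))) ^ p.toReal) ^ (1 / p.toReal)

/-- weighted `L^p_ν` norm -/
def LpW (p : ℝ≥0∞) (ν : (Fin d → ℝ) → ℝ) (f : (Fin d → ℝ) → ℂ) : ℝ≥0∞ :=
  eLpNorm (fun x => ν x • f x) p volume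

/-- the unit cube `[0,1]^d` -/
def cube : Set (Fin d → ℝ) := Set.Icc 0 1

/-- local essential supremum of `|f|` on `j + [0,1]^d` -/
def amal (f : (Fin d → ℝ) → ℂ) (j : Fin d → ℤ) : ℝ≥0∞ :=
  essSup (fun x => (‖f (x + zc j)‖₊ : ℝ≥0∞)) (volume.restrict cube)

/-- Wiener amalgam norm `W^p_ν` -/
def WW (p : ℝ≥0∞) (ν : (Fin d → ℝ) → ℝ) (f : (Fin d → ℝ) → ℂ) : ℝ≥0∞ :=
  if p = ∞ then ⨆ j, amal f j * ENNReal.ofReal (ν (zc j))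
  else (∑' j, (amal f j * ENNReal.ofReal (ν (zc j))) ^ p.toReal) ^ (1 / p.toReal)

/-- the norm of `𝓛^p_ν` -/
def curlyL (p : ℝ≥0∞) (ν : (Fin d → ℝ) → ℝ) (f : (Fin d → ℝ) → ℂ) : ℝ≥0∞ :=
  if p = ∞ then
    essSup (fun x => ∑' j, (‖f (x + zc j)‖₊ : ℝ≥0∞) * ENNReal.ofReal (ν (x + zc j)))
      (volume.restrict cube)
  else (∫⁻ x in cube,
      (∑' j, (‖f (x + zc j)‖₊ : ℝ≥0∞) * ENNReal.ofReal (ν (x + zc j))) ^ p.toReal) ^ (1 / p.toReal)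

/-- a weight: continuous, symmetric, nonnegative, submultiplicative -/
def IsWeight (ω : (Fin d → ℝ) → ℝ) : Prop :=
  Continuous ω ∧ (∀ x, ω (-x) = ω x) ∧ (∀ x, 0 ≤ ω x) ∧ ∀ x y, ω (x + y) ≤ ω x * ω y

/-- `μ` is an `ω`-moderate weight -/
def IsModerate (ω μ : (Fin d → ℝ) → ℝ) : Prop :=
  (∀ x, 0 ≤ μ x) ∧ ∃ C₀ > 0, ∀ x y, μ (x + y) ≤ C₀ * ω x * μ y

/-- semi-convolution of a function and a sequence -/
def semiConv (f : (Fin d → ℝ) → ℂ) (c : (Fin d → ℤ) → ℂ) : (Fin d → ℝ) → ℂ :=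
  fun x => ∑' j, c j * f (x - zc j)

/-- Fourier transform `φ̂(ξ) = ∫ φ(x) e^{-i x·ξ} dx` -/
def FT (φ : (Fin d → ℝ) → ℂ) (ξ : Fin d → ℝ) : ℂ :=
  ∫ x : Fin d → ℝ, φ x * Complex.exp (-(Complex.I * (∑ i, (x i : ℂ) * (ξ i : ℂ))))

/-- the Gram matrix `[Φ̂,Φ̂](ξ)` -/
def Gram {r : ℕ} (Φ : Fin r → (Fin d → ℝ) → ℂ) (ξ : Fin d → ℝ) : Matrix (Fin r) (Fin r) ℂ :=
  Matrix.of fun i i' =>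
    ∑' k : Fin d → ℤ, FT (Φ i) (ξ + (2 * π) • zc k) * star (FT (Φ i') (ξ + (2 * π) • zc k))

/-- the dimension of the span of a family of vectors in `ℂ^r` -/
def rankSpan {r : ℕ} (v : (Fin d → ℤ) → (Fin r → ℂ)) : ℕ :=
  Module.finrank ℂ (Submodule.span ℂ (Set.range v))

/-- the synthesis operator `S_Φ` -/
def SynOp {r : ℕ} (Φ : Fin r → (Fin d → ℝ) → ℂ) (c : Fin r → (Fin d → ℤ) → ℂ) :
    (Fin d → ℝ) → ℂ :=
  fun x => ∑ i, ∑' j, c i j * Φ i (x - zc j)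

/-- the weighted shift-invariant space `V^p_μ(Φ)` -/
def VSI {r : ℕ} (p : ℝ≥0∞) (μ : (Fin d → ℝ) → ℝ) (Φ : Fin r → (Fin d → ℝ) → ℂ) :
    Set ((Fin d → ℝ) → ℂ) :=
  {f | AEStronglyMeasurable f volume ∧ LpW p μ f < ∞ ∧
    ∃ c : Fin r → (Fin d → ℤ) → ℂ, (∀ i, lpW p μ (c i) < ∞) ∧ f =ᵐ[volume] SynOp Φ c}

/-- `ℓ^p_μ`-stability of the synthesis operator -/
def Stable {r : ℕ} (p : ℝ≥0∞) (μ : (Fin d → ℝ) → ℝ) (Φ : Fin r → (Fin d → ℝ) → ℂ) : Prop :=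
  ∃ C : ℝ≥0∞, 0 < C ∧ C < ∞ ∧ ∀ c : Fin r → (Fin d → ℤ) → ℂ, (∀ i, lpW p μ (c i) < ∞) →
    C⁻¹ * (∑ i, lpW p μ (c i)) ≤ LpW p μ (SynOp Φ c) ∧
      LpW p μ (SynOp Φ c) ≤ C * ∑ i, lpW p μ (c i)

/-- `{φ_i(·-j)}` is a `p`-frame for `V^p_μ(Φ)` -/
def PFrame {r : ℕ} (p : ℝ≥0∞) (μ : (Fin d → ℝ) → ℝ) (Φ : Fin r → (Fin d → ℝ) → ℂ) : Prop :=
  ∃ C : ℝ≥0∞, 0 < C ∧ C < ∞ ∧ ∀ f ∈ VSI p μ Φ,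
    C⁻¹ * LpW p μ f ≤ ∑ i, lpW p μ (fun j => ∫ x, f x * Φ i (x - zc j)) ∧
      ∑ i, lpW p μ (fun j => ∫ x, f x * Φ i (x - zc j)) ≤ C * LpW p μ f

/-- `V^p_μ(Φ)` is closed in `L^p_μ` -/
def VClosedL {r : ℕ} (p : ℝ≥0∞) (μ : (Fin d → ℝ) → ℝ) (Φ : Fin r → (Fin d → ℝ) → ℂ) : Prop :=
  ∀ f : (Fin d → ℝ) → ℂ, AEStronglyMeasurable f volume → LpW p μ f < ∞ →
    ∀ F : ℕ → (Fin d → ℝ) → ℂ, (∀ n, F n ∈ VSI p μ Φ) →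
      Tendsto (fun n => LpW p μ (f - F n)) atTop (𝓝 0) → f ∈ VSI p μ Φ

/-- `V^p_μ(Φ)` is closed in `W^p_μ` -/
def VClosedW {r : ℕ} (p : ℝ≥0∞) (μ : (Fin d → ℝ) → ℝ) (Φ : Fin r → (Fin d → ℝ) → ℂ) : Prop :=
  ∀ f : (Fin d → ℝ) → ℂ, AEStronglyMeasurable f volume → WW p μ f < ∞ →
    ∀ F : ℕ → (Fin d → ℝ) → ℂ, (∀ n, F n ∈ VSI p μ Φ) →
      Tendsto (fun n => WW p μ (f - F n)) atTop (𝓝 0) → f ∈ VSI p μ Φ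

end

open MeasureTheory Filter Topology ENNReal Real Matrix

/-!
By moderateness, `S_Φ` conjugated by the weight is dominated, on almost every coset `x + ℤ^d`, by
convolution with one fixed `h ∈ ℓ^1(ℤ^d)`. Apply the `ℓ^p` lower bound to `c` multiplied by the
window `exp(-ε|· - n|)`. The commutator of `S_Φ` with this window is small relative to the window
when `ε` is small, and since windowed `ℓ^p` norms, summed in `ℓ^q` over the centres `n`, are
comparable to plain `ℓ^q` norms, the commutator is absorbed on the left. Hence the `ℓ^q_μ` norm of
`c` is bounded by that of the local suprema of `S_Φ c`.

To replace local suprema by local `L^q` norms, note that the finitely many relevant values of the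
generators form a bounded, hence totally bounded, family as the point `x` of the unit cube varies.
So almost every `x` has a set of points `y` of measure at least some `δ > 0`, independent of `x`, on
which these values, and therefore `S_Φ c`, almost agree with those at `x`. The resulting error is
again small relative to `c` and is absorbed in turn.
-/

section ENNRealValued

variable {α κ : Type*} {mα : MeasurableSpace α} {ν : Measure α} {p : ℝ≥0∞}

theorem eLpNorm_const_mul_ennreal (a : ℝ≥0∞) {f : α → ℝ≥0∞} (hf : AEMeasurable f ν) :
    eLpNorm (fun x => a * f x) p ν = a * eLpNorm f p ν := by
  rcases eq_or_ne p 0 with rfl | hp0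
  · simp
  rcases eq_or_ne p ∞ with rfl | hp
  · simp only [eLpNorm_exponent_top, eLpNormEssSup, enorm_eq_self, ENNReal.essSup_const_mul]
  have hp' : 0 < p.toReal := toReal_pos hp0 hp
  simp only [eLpNorm_eq_lintegral_rpow_enorm_toReal hp0 hp, enorm_eq_self,
    mul_rpow_of_nonneg _ _ hp'.le]
  rw [lintegral_const_mul'' _ (hf.pow_const _), mul_rpow_of_nonneg _ _ (by positivity), one_div,
    rpow_rpow_inv hp'.ne']

theorem eLpNorm_tsum_le [Countable κ] {f : κ → α → ℝ≥0∞} (hf : ∀ k, AEMeasurable (f k) ν)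
    (hp : 1 ≤ p) : eLpNorm (fun x => ∑' k, f k x) p ν ≤ ∑' k, eLpNorm (f k) p ν := by
  rcases eq_or_ne p ∞ with rfl | hp_top
  · simp only [eLpNorm_exponent_top, eLpNormEssSup, enorm_eq_self]
    refine essSup_le_of_ae_le _ ?_
    filter_upwards [ae_all_iff.2 fun k => ENNReal.ae_le_essSup (f k)] with x hx
    exact ENNReal.tsum_le_tsum hx
  have hp0 : p ≠ 0 := (one_pos.trans_le hp).ne'
  have hp' : 0 < p.toReal := toReal_pos hp0 hp_top
  have partial_sums (s : Finset κ) :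
      ∫⁻ x, (∑ k ∈ s, f k x) ^ p.toReal ∂ν ≤ (∑' k, eLpNorm (f k) p ν) ^ p.toReal := by
    have minkowski := eLpNorm_sum_le (s := s) (fun k _ => (hf k).aestronglyMeasurable) hp
    rw [eLpNorm_eq_lintegral_rpow_enorm_toReal hp0 hp_top, one_div,
      rpow_inv_le_iff hp'] at minkowski
    simp only [Finset.sum_apply, enorm_eq_self] at minkowski
    exact minkowski.trans (rpow_le_rpow (ENNReal.sum_le_tsum s) hp'.le)
  have hmono : Monotone fun (s : Finset κ) x => (∑ k ∈ s, f k x) ^ p.toReal := fun s t hst x =>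
    rpow_le_rpow (Finset.sum_le_sum_of_subset hst) hp'.le
  have hsup (x : α) : (∑' k, f k x) ^ p.toReal = ⨆ s : Finset κ, (∑ k ∈ s, f k x) ^ p.toReal := by
    rw [ENNReal.tsum_eq_iSup_sum]
    exact (orderIsoRpow _ hp').map_iSup _
  rw [eLpNorm_eq_lintegral_rpow_enorm_toReal hp0 hp_top, one_div, rpow_inv_le_iff hp']
  simp only [enorm_eq_self, hsup]
  rw [lintegral_iSup_directed (fun s => (Finset.aemeasurable_fun_sum s fun k _ => hf k).pow_const _)
    hmono.directed_le]
  exact iSup_le partial_sums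

theorem eLpNorm_count_le_tsum [Countable α] [DiscreteMeasurableSpace α] (hp : 1 ≤ p)
    (g : α → ℝ≥0∞) : eLpNorm g p .count ≤ ∑' i, g i := by
  classical
  have single (i : α) : eLpNorm (Pi.single i (g i)) p .count ≤ g i := by
    have := eLpNorm_indicator_const_le (μ := .count) (s := {i}) (g i) p
    simpa [Set.indicator_singleton] using this
  calc eLpNorm g p .count
      = eLpNorm (fun j => ∑' i, Pi.single (M := fun _ => ℝ≥0∞) i (g i) j) p .count := by
        congr with j
        rw [tsum_eq_single j fun i hij => Pi.single_eq_of_ne hij.symm _, Pi.single_eq_same]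
    _ ≤ ∑' i, eLpNorm (Pi.single (M := fun _ => ℝ≥0∞) i (g i)) p .count :=
        eLpNorm_tsum_le (fun _ => .of_discrete) hp
    _ ≤ ∑' i, g i := ENNReal.tsum_le_tsum single

end ENNRealValued

section Sequence

variable {V : Type*} [AddCommGroup V] [MeasurableSpace V] {p q : ℝ≥0∞}

/-- The mixed norm `‖n ↦ ‖w(· - n) g‖_p‖_q`: the window `w` localizes `g` around each lattice
point, where it is measured in `ℓ^p`; the local norms are then measured in `ℓ^q`. For summable `w`
it is equivalent to the `ℓ^q` norm of `g`, whatever `p` is. -/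
noncomputable def windowNorm (p q : ℝ≥0∞) (w g : V → ℝ≥0∞) : ℝ≥0∞ :=
  eLpNorm (fun n => eLpNorm (fun j => w (j - n) * g j) p .count) q .count

theorem windowNorm_mono {w w' : V → ℝ≥0∞} (h : ∀ l, w l ≤ w' l) (g : V → ℝ≥0∞) :
    windowNorm p q w g ≤ windowNorm p q w' g := by
  refine eLpNorm_mono_enorm fun n => eLpNorm_mono_enorm fun j => ?_
  exact mul_le_mul_left (h _) _

variable [DiscreteMeasurableSpace V]

theorem windowNorm_const_mul (a : ℝ≥0∞) (w g : V → ℝ≥0∞) :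
    windowNorm p q (fun l => a * w l) g = a * windowNorm p q w g := by
  simp only [windowNorm, mul_assoc, eLpNorm_const_mul_ennreal _ AEMeasurable.of_discrete]

variable [Countable V]

theorem eLpNorm_count_comp_add_right (g : V → ℝ≥0∞) (n : V) :
    eLpNorm (fun j => g (j + n)) p .count = eLpNorm g p .count :=
  eLpNorm_comp_measurePreserving AEStronglyMeasurable.of_discrete
    (measurePreserving_add_right _ n)

theorem eLpNorm_convolution_le (hp : 1 ≤ p) (h g : V → ℝ≥0∞) :
    eLpNorm (fun k => ∑' j, h (k - j) * g j) p .count ≤ (∑' m, h m) * eLpNorm g p .count := by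
  calc eLpNorm (fun k => ∑' j, h (k - j) * g j) p .count
      = eLpNorm (fun k => ∑' m, h m * g (k - m)) p .count := by
        congr with k
        rw [← (Equiv.subLeft k).tsum_eq]
        simp only [Equiv.subLeft_apply, sub_sub_self]
    _ ≤ ∑' m, eLpNorm (fun k => h m * g (k - m)) p .count :=
        eLpNorm_tsum_le (fun _ => .of_discrete) hp
    _ = (∑' m, h m) * eLpNorm g p .count := by
        simp only [eLpNorm_const_mul_ennreal _ AEMeasurable.of_discrete, sub_eq_add_neg,
          eLpNorm_count_comp_add_right, ENNReal.tsum_mul_right]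

theorem windowNorm_comp_add_right (w g : V → ℝ≥0∞) (m : V) :
    windowNorm p q (fun l => w (l + m)) g = windowNorm p q w g := by
  rw [windowNorm, windowNorm, ← eLpNorm_count_comp_add_right _ m]
  simp only [sub_add_eq_sub_sub, sub_add_cancel]

theorem windowNorm_add_le (hp : 1 ≤ p) (hq : 1 ≤ q) (w w' g : V → ℝ≥0∞) :
    windowNorm p q (fun l => w l + w' l) g ≤ windowNorm p q w g + windowNorm p q w' g := by
  refine le_trans (eLpNorm_mono_enorm fun n => ?_) (eLpNorm_add_le .of_discrete .of_discrete hq)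
  simp only [add_mul]
  exact eLpNorm_add_le .of_discrete .of_discrete hp

theorem windowNorm_le (hp : 1 ≤ p) (hq : 1 ≤ q) (w g : V → ℝ≥0∞) :
    windowNorm p q w g ≤ (∑' l, w l) * eLpNorm g q .count := by
  have local_le (n : V) : eLpNorm (fun j => w (j - n) * g j) p .count ≤ ∑' l, w l * g (n + l) := by
    refine (eLpNorm_count_le_tsum hp _).trans_eq ?_
    rw [← (Equiv.addLeft n).tsum_eq]
    simp only [Equiv.coe_addLeft, add_sub_cancel_left]
  calc windowNorm p q w g
      ≤ eLpNorm (fun n => ∑' l, w l * g (n + l)) q .count := eLpNorm_mono_enorm local_le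
    _ ≤ ∑' l, eLpNorm (fun n => w l * g (n + l)) q .count :=
        eLpNorm_tsum_le (fun _ => .of_discrete) hq
    _ = (∑' l, w l) * eLpNorm g q .count := by
        simp only [eLpNorm_const_mul_ennreal _ AEMeasurable.of_discrete,
          eLpNorm_count_comp_add_right, ENNReal.tsum_mul_right]

theorem eLpNorm_le_windowNorm (hp : p ≠ 0) {w : V → ℝ≥0∞} (hw : 1 ≤ w 0) (g : V → ℝ≥0∞) :
    eLpNorm g q .count ≤ windowNorm p q w g := by
  refine eLpNorm_mono_enorm fun n => ?_
  calc g n ≤ w (n - n) * g n := by rw [sub_self]; exact le_mul_of_one_le_left' hw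
    _ ≤ _ := enorm_le_eLpNorm_count (fun j => w (j - n) * g j) n hp

theorem eLpNorm_commutator_le (hp : 1 ≤ p) (hq : 1 ≤ q) (w : V → ℝ) (h g : V → ℝ≥0∞) :
    eLpNorm (fun n => eLpNorm
      (fun k => ∑' j, h (k - j) * (‖w (j - n) - w (k - n)‖ₑ * g j)) p .count) q .count ≤
      ∑' m, h m * windowNorm p q (fun l => ‖w l - w (l + m)‖ₑ) g := by
  have translate (n : V) :
      eLpNorm (fun k => ∑' j, h (k - j) * (‖w (j - n) - w (k - n)‖ₑ * g j)) p .count ≤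
        ∑' m, h m * eLpNorm (fun j => ‖w (j - n) - w (j - n + m)‖ₑ * g j) p .count := by
    calc _ = eLpNorm (fun k => ∑' m, h m * (‖w (k - m - n) - w (k - m - n + m)‖ₑ * g (k - m)))
            p .count := by
          congr with k
          rw [← (Equiv.subLeft k).tsum_eq]
          simp only [Equiv.subLeft_apply, sub_sub_self, sub_right_comm k _ n, sub_add_cancel]
      _ ≤ ∑' m, eLpNorm (fun k => h m * (‖w (k - m - n) - w (k - m - n + m)‖ₑ * g (k - m)))
            p .count := eLpNorm_tsum_le (fun _ => .of_discrete) hp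
      _ = _ := by
          refine tsum_congr fun m => ?_
          rw [eLpNorm_const_mul_ennreal _ .of_discrete, ← eLpNorm_count_comp_add_right _ m]
          simp only [add_sub_cancel_right]
  refine (eLpNorm_mono_enorm translate).trans
    ((eLpNorm_tsum_le (fun _ => .of_discrete) hq).trans ?_)
  simp only [eLpNorm_const_mul_ennreal _ AEMeasurable.of_discrete, windowNorm, le_refl]

end Sequence

section ExponentialWindow

theorem norm_exp_sub_one_le_exp_norm_sub_one (t : ℝ) : ‖Real.exp t - 1‖ ≤ Real.exp ‖t‖ - 1 := by
  have := Complex.norm_exp_sub_sum_le_exp_norm_sub_sum (t : ℂ) 1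
  simp only [Finset.range_one, Finset.sum_singleton, pow_zero, Nat.factorial_zero, Nat.cast_one,
    div_one, Complex.norm_real] at this
  exact_mod_cast this

variable {V : Type*} [SeminormedAddCommGroup V]

theorem enorm_exp_neg_norm_sub_le {ε : ℝ} (hε : 0 ≤ ε) (l m : V) :
    ‖Real.exp (-(ε * ‖l‖)) - Real.exp (-(ε * ‖l + m‖))‖ₑ ≤
      ENNReal.ofReal (Real.exp (ε * ‖m‖) - 1) * ‖Real.exp (-(ε * ‖l‖))‖ₑ := by
  have hexp : Real.exp (-(ε * ‖l + m‖)) =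
      Real.exp (ε * (‖l‖ - ‖l + m‖)) * Real.exp (-(ε * ‖l‖)) := by
    rw [← Real.exp_add]; ring_nf
  have hdiff : ‖ε * (‖l‖ - ‖l + m‖)‖ ≤ ε * ‖m‖ := by
    rw [norm_mul, Real.norm_of_nonneg hε]
    gcongr
    simpa using abs_norm_sub_norm_le l (l + m)
  rw [enorm_sub_rev, hexp, ← sub_one_mul, enorm_mul, ← ofReal_norm]
  gcongr
  exact (norm_exp_sub_one_le_exp_norm_sub_one _).trans
    (sub_le_sub_right (Real.exp_le_exp.2 hdiff) 1)

theorem tendsto_tsum_mul_min_exp_sub_one [Countable V] {h : V → ℝ≥0∞} (hh : ∑' m, h m ≠ ∞) :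
    Tendsto (fun ε : ℝ => ∑' m, h m * min (ENNReal.ofReal (Real.exp (ε * ‖m‖) - 1)) 2)
      (𝓝[>] 0) (𝓝 0) := by
  let _ : MeasurableSpace V := ⊤
  have pointwise (m : V) :
      Tendsto (fun ε : ℝ => h m * min (ENNReal.ofReal (Real.exp (ε * ‖m‖) - 1)) 2)
        (𝓝[>] 0) (𝓝 0) := by
    have hlim : Tendsto (fun ε : ℝ => min (ENNReal.ofReal (Real.exp (ε * ‖m‖) - 1)) 2) (𝓝 0)
        (𝓝 0) := by
      have : Continuous fun ε : ℝ => min (ENNReal.ofReal (Real.exp (ε * ‖m‖) - 1)) 2 :=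
        (ENNReal.continuous_ofReal.comp (by fun_prop)).min continuous_const
      simpa using this.tendsto 0
    simpa using (ENNReal.Tendsto.const_mul hlim
      (.inr (ENNReal.ne_top_of_tsum_ne_top hh m))).mono_left nhdsWithin_le_nhds
  have := tendsto_lintegral_filter_of_dominated_convergence (μ := .count) (fun m => h m * 2)
    (.of_forall fun ε => Measurable.of_discrete)
    (.of_forall fun ε => ae_of_all _ fun m => mul_le_mul_right (min_le_right _ _) (h m))
    (by rw [lintegral_count, ENNReal.tsum_mul_right]; exact mul_ne_top hh ofNat_ne_top)
    (ae_of_all _ pointwise)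
  simpa only [lintegral_count, tsum_zero] using this

variable [Countable V] [MeasurableSpace V] [DiscreteMeasurableSpace V]

theorem exists_window_tsum_mul_windowNorm_sub_le
    (hV : ∀ ε > 0, Summable fun l : V => Real.exp (-(ε * ‖l‖)))
    {h : V → ℝ≥0∞} (hh : ∑' m, h m ≠ ∞) {θ : ℝ≥0∞} (hθ : θ ≠ 0) :
    ∃ w : V → ℝ, w 0 = 1 ∧ ∑' l, ‖w l‖ₑ ≠ ∞ ∧ ∀ (p q : ℝ≥0∞) (g : V → ℝ≥0∞), 1 ≤ p → 1 ≤ q →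
      ∑' m, h m * windowNorm p q (fun l => ‖w l - w (l + m)‖ₑ) g ≤
        θ * windowNorm p q (fun l => ‖w l‖ₑ) g := by
  obtain ⟨ε, hsmall, hε⟩ : ∃ ε : ℝ,
      ∑' m, h m * min (ENNReal.ofReal (Real.exp (ε * ‖m‖) - 1)) 2 ≤ θ ∧ 0 < ε :=
    (((tendsto_tsum_mul_min_exp_sub_one hh).eventually_le_const (pos_iff_ne_zero.2 hθ)).and
      self_mem_nhdsWithin).exists
  refine ⟨fun l => Real.exp (-(ε * ‖l‖)), by simp, ?_, fun p q g hp hq => ?_⟩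
  · exact tsum_enorm_ne_top_iff_summable_norm.2 (hV ε hε).norm
  set w : V → ℝ := fun l => Real.exp (-(ε * ‖l‖))
  -- The bound `far` lets the series over `m` be dominated with `h` merely summable, without
  -- exponential decay.
  have near (m : V) : windowNorm p q (fun l => ‖w l - w (l + m)‖ₑ) g ≤
      ENNReal.ofReal (Real.exp (ε * ‖m‖) - 1) * windowNorm p q (fun l => ‖w l‖ₑ) g :=
    (windowNorm_mono (enorm_exp_neg_norm_sub_le hε.le · m) g).trans_eq (windowNorm_const_mul _ _ _)
  have far (m : V) : windowNorm p q (fun l => ‖w l - w (l + m)‖ₑ) g ≤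
      2 * windowNorm p q (fun l => ‖w l‖ₑ) g := by
    calc windowNorm p q (fun l => ‖w l - w (l + m)‖ₑ) g
        ≤ windowNorm p q (fun l => ‖w l‖ₑ + ‖w (l + m)‖ₑ) g :=
          windowNorm_mono (fun l => enorm_sub_le) g
      _ ≤ 2 * windowNorm p q (fun l => ‖w l‖ₑ) g := by
          refine (windowNorm_add_le hp hq _ _ g).trans_eq ?_
          rw [windowNorm_comp_add_right (fun l => ‖w l‖ₑ), two_mul]
  calc ∑' m, h m * windowNorm p q (fun l => ‖w l - w (l + m)‖ₑ) g
      ≤ ∑' m, h m * min (ENNReal.ofReal (Real.exp (ε * ‖m‖) - 1)) 2 *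
          windowNorm p q (fun l => ‖w l‖ₑ) g := by
        refine ENNReal.tsum_le_tsum fun m => ?_
        rw [mul_assoc, min_mul_of_nonneg _ _ zero_le]
        exact mul_le_mul_right (le_min (near m) (far m)) _
    _ ≤ θ * windowNorm p q (fun l => ‖w l‖ₑ) g := by
        rw [ENNReal.tsum_mul_right]
        gcongr

theorem le_two_mul_of_le_add_inv_two_mul {a b : ℝ≥0∞} (ha : a ≠ ∞) (h : a ≤ b + 2⁻¹ * a) :
    a ≤ 2 * b := by
  have half : 2⁻¹ * a + 2⁻¹ * a = a := by rw [← add_mul, ENNReal.inv_two_add_inv_two, one_mul]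
  have : 2⁻¹ * a ≤ b := by
    refine (ENNReal.add_le_add_iff_right (a := 2⁻¹ * a) (by finiteness)).1 ?_
    rwa [half]
  calc a = 2 * (2⁻¹ * a) := by rw [two_mul, half]
    _ ≤ 2 * b := by gcongr

theorem exists_eLpNorm_le_of_forall_window
    (hV : ∀ ε > 0, Summable fun l : V => Real.exp (-(ε * ‖l‖)))
    {h : V → ℝ≥0∞} (hh : ∑' m, h m ≠ ∞) {p q : ℝ≥0∞} (hp : 1 ≤ p) (hq : 1 ≤ q)
    {A : ℝ≥0∞} (hA : A ≠ ∞) :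
    ∃ B ≠ ∞, ∀ g b : V → ℝ≥0∞, eLpNorm g q .count ≠ ∞ →
      (∀ w : V → ℝ, ∑' l, ‖w l‖ₑ ≠ ∞ →
        eLpNorm (fun j => ‖w j‖ₑ * g j) p .count ≤
          A * (eLpNorm (fun j => ‖w j‖ₑ * b j) p .count +
            eLpNorm (fun k => ∑' j, h (k - j) * (‖w j - w k‖ₑ * g j)) p .count)) →
      eLpNorm g q .count ≤ B * eLpNorm b q .count := by
  obtain ⟨θ, hθ, hAθ⟩ := ENNReal.exists_nnreal_pos_mul_lt hA (b := 2⁻¹) (by simp)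
  obtain ⟨w, hw0, hw, hcomm⟩ := exists_window_tsum_mul_windowNorm_sub_le hV hh
    (θ := θ) (by exact_mod_cast hθ.ne')
  refine ⟨2 * A * ∑' l, ‖w l‖ₑ, by finiteness, fun g b hg hwindow => ?_⟩
  have translates (n : V) := hwindow (fun j => w (j - n))
    (((Equiv.subRight n).tsum_eq fun l => ‖w l‖ₑ).trans_ne hw)
  have finite : windowNorm p q (fun l => ‖w l‖ₑ) g ≠ ∞ :=
    ne_top_of_le_ne_top (mul_ne_top hw hg) (windowNorm_le hp hq _ g)
  have absorb : windowNorm p q (fun l => ‖w l‖ₑ) g ≤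
      A * windowNorm p q (fun l => ‖w l‖ₑ) b + 2⁻¹ * windowNorm p q (fun l => ‖w l‖ₑ) g := by
    calc windowNorm p q (fun l => ‖w l‖ₑ) g
        ≤ A * (windowNorm p q (fun l => ‖w l‖ₑ) b +
            ∑' m, h m * windowNorm p q (fun l => ‖w l - w (l + m)‖ₑ) g) := by
          refine (eLpNorm_mono_enorm (g := fun n => A * _) translates).trans ?_
          rw [eLpNorm_const_mul_ennreal _ .of_discrete]
          gcongr
          refine (eLpNorm_add_le .of_discrete .of_discrete hq).trans ?_
          exact add_le_add_right (eLpNorm_commutator_le hp hq w h g) _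
      _ ≤ A * (windowNorm p q (fun l => ‖w l‖ₑ) b + θ * windowNorm p q (fun l => ‖w l‖ₑ) g) := by
          gcongr
          exact hcomm p q g hp hq
      _ ≤ _ := by
          rw [mul_add, ← mul_assoc, mul_comm A θ]
          gcongr
  calc eLpNorm g q .count ≤ windowNorm p q (fun l => ‖w l‖ₑ) g :=
        eLpNorm_le_windowNorm (one_pos.trans_le hp).ne' (by simp [hw0]) g
    _ ≤ 2 * (A * windowNorm p q (fun l => ‖w l‖ₑ) b) :=
        le_two_mul_of_le_add_inv_two_mul finite absorb
    _ ≤ 2 * (A * ((∑' l, ‖w l‖ₑ) * eLpNorm b q .count)) := by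
        gcongr
        exact windowNorm_le hp hq _ b
    _ = _ := by ring

end ExponentialWindow

section IntegerLattice

theorem tsum_fin_pi_prod_eq {α : Type*} {d : ℕ} (f : Fin d → α → ℝ≥0∞) :
    ∑' j : Fin d → α, ∏ i, f i (j i) = ∏ i, ∑' a, f i a := by
  induction d with
  | zero => simp
  | succ d ih =>
    rw [← (Fin.consEquiv fun _ => α).tsum_eq]
    simp only [Fin.consEquiv_apply, Fin.prod_univ_succ, Fin.cons_zero, Fin.cons_succ]
    rw [ENNReal.tsum_prod (f := fun a (v : Fin d → α) => f 0 a * ∏ i, f i.succ (v i))]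
    simp only [ENNReal.tsum_mul_left, ih, ENNReal.tsum_mul_right]

theorem summable_exp_neg_mul_norm_int {ε : ℝ} (hε : 0 < ε) :
    Summable fun n : ℤ => Real.exp (-(ε * ‖n‖)) := by
  have hnat : Summable fun n : ℕ => Real.exp (-(ε * n)) := by
    simpa using Real.summable_exp_nat_mul_of_ge (neg_lt_zero.2 hε) (f := fun n => (n : ℝ))
      fun _ => le_rfl
  exact summable_int_iff_summable_nat_and_neg.2 ⟨by simpa using hnat, by simpa using hnat⟩

theorem summable_exp_neg_mul_norm_pi_int {d : ℕ} {ε : ℝ} (hε : 0 < ε) :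
    Summable fun j : Fin d → ℤ => Real.exp (-(ε * ‖j‖)) := by
  rcases d.eq_zero_or_pos with rfl | hd
  · exact .of_finite
  have hd' : (0 : ℝ) < d := by exact_mod_cast hd
  have product_bound (j : Fin d → ℤ) :
      ‖Real.exp (-(ε * ‖j‖))‖ₑ ≤ ∏ i, ‖Real.exp (-(ε / d * ‖j i‖))‖ₑ := by
    have hsum : ∑ i, ‖j i‖ ≤ d * ‖j‖ := by
      simpa using Finset.sum_le_card_nsmul Finset.univ _ _ fun i _ => norm_le_pi_norm j i
    simp only [Real.enorm_of_nonneg (Real.exp_pos _).le]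
    rw [← ENNReal.ofReal_prod_of_nonneg fun _ _ => (Real.exp_pos _).le, ← Real.exp_sum,
      Finset.sum_neg_distrib, ← Finset.mul_sum, div_mul_eq_mul_div, mul_div_assoc]
    gcongr
    exact (div_le_iff₀' hd').2 hsum
  refine .of_enorm (ne_top_of_le_ne_top ?_ (ENNReal.tsum_le_tsum product_bound))
  rw [tsum_fin_pi_prod_eq fun _ n => ‖Real.exp (-(ε / d * ‖n‖))‖ₑ]
  exact ENNReal.prod_ne_top fun _ _ => tsum_enorm_ne_top_iff_summable_norm.2
    (summable_exp_neg_mul_norm_int (div_pos hε hd')).norm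

end IntegerLattice

section Boxes

theorem eLpNorm_sum_measure {α ι ε : Type*} [ENorm ε] [Countable ι] [MeasurableSpace ι]
    [MeasurableSingletonClass ι] {mα : MeasurableSpace α} {s : ℝ≥0∞} (f : α → ε)
    (ν : ι → Measure α) :
    eLpNorm f s (.sum ν) = eLpNorm (fun i => eLpNorm f s (ν i)) s .count := by
  rcases eq_or_ne s 0 with rfl | hs0
  · simp
  rcases eq_or_ne s ∞ with rfl | hs
  · simp only [eLpNorm_exponent_top, eLpNormEssSup_count, enorm_eq_self]
    refine le_antisymm (essSup_le_of_ae_le _ (Measure.ae_sum_iff.2 fun i => ?_))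
      (iSup_le fun i => essSup_mono_measure (Measure.le_sum ν i).absolutelyContinuous)
    filter_upwards [enorm_ae_le_eLpNormEssSup f (ν i)] with x hx
    exact hx.trans (le_iSup (fun i => eLpNormEssSup f (ν i)) i)
  · have hs' : 0 < s.toReal := toReal_pos hs0 hs
    simp only [eLpNorm_eq_lintegral_rpow_enorm_toReal hs0 hs, lintegral_sum_measure,
      lintegral_count, enorm_eq_self, one_div, rpow_inv_rpow hs'.ne']

variable {d : ℕ}

theorem zc_sub (j k : Fin d → ℤ) : zc (j - k) = zc j - zc k := by
  ext i; simp [zc]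

instance isProbabilityMeasure_restrict_cube :
    IsProbabilityMeasure (volume.restrict (cube : Set (Fin d → ℝ))) :=
  ⟨by simp [cube, Real.volume_Icc_pi]⟩

theorem restrict_floor_eq_map_restrict_cube (k : Fin d → ℤ) :
    volume.restrict ((fun (x : Fin d → ℝ) i => ⌊x i⌋) ⁻¹' {k}) =
      (volume.restrict cube).map (MeasurableEquiv.addRight (zc k)) := by
  have hpre : MeasurableEquiv.addRight (zc k) ⁻¹' ((fun (x : Fin d → ℝ) i => ⌊x i⌋) ⁻¹' {k}) =
      Set.univ.pi fun _ => Set.Ico 0 1 := by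
    ext x
    simp [funext_iff, zc, Int.floor_eq_zero_iff]
  have hcube : (Set.univ.pi fun _ => Set.Ico 0 1 : Set (Fin d → ℝ)) =ᵐ[volume] cube :=
    Measure.univ_pi_Ico_ae_eq_Icc (f := (0 : Fin d → ℝ)) (g := 1)
  rw [← Measure.restrict_congr_set hcube, ← hpre]
  exact ((measurePreserving_add_right volume (zc k)).restrict_preimage_emb
    (MeasurableEquiv.addRight (zc k)).measurableEmbedding _).map_eq.symm

theorem volume_eq_sum_map_restrict_cube :
    (volume : Measure (Fin d → ℝ)) = Measure.sum fun k : Fin d → ℤ =>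
      (volume.restrict cube).map (MeasurableEquiv.addRight (zc k)) := by
  have hfloor : Measurable fun (x : Fin d → ℝ) i => ⌊x i⌋ := by fun_prop
  simp only [← restrict_floor_eq_map_restrict_cube]
  rw [← Measure.restrict_iUnion (fun k l hkl => (Set.disjoint_singleton.2 hkl).preimage _)
    fun k => hfloor (measurableSet_singleton k), ← Set.preimage_iUnion, Set.iUnion_of_singleton,
    Set.preimage_univ, Measure.restrict_univ]

/-- The `L^s` norm of `f` over the box `k + [0,1]^d`. At `s = ∞` it is `amal f k`. -/
noncomputable def boxNorm (s : ℝ≥0∞) (f : (Fin d → ℝ) → ℂ) (k : Fin d → ℤ) : ℝ≥0∞ :=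
  eLpNorm (fun x => f (x + zc k)) s (volume.restrict cube)

theorem boxNorm_le_amal (s : ℝ≥0∞) (f : (Fin d → ℝ) → ℂ) (k : Fin d → ℤ) :
    boxNorm s f k ≤ amal f k := by
  have hbound : ∀ᵐ x ∂volume.restrict cube, ‖f (x + zc k)‖ₑ ≤ amal f k := ENNReal.ae_le_essSup _
  simpa [boxNorm] using eLpNorm_le_of_ae_enorm_bound (p := s) hbound

theorem eLpNorm_eq_eLpNorm_boxNorm (s : ℝ≥0∞) (f : (Fin d → ℝ) → ℂ) :
    eLpNorm f s volume = eLpNorm (boxNorm s f) s .count := by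
  conv_lhs => rw [volume_eq_sum_map_restrict_cube, eLpNorm_sum_measure]
  simp only [(MeasurableEquiv.measurableEmbedding _).eLpNorm_map_measure]
  rfl

theorem IsModerate.exists_comparable_on_cube {ω μ : (Fin d → ℝ) → ℝ} (hω : IsWeight ω)
    (hμ : IsModerate ω μ) :
    ∃ K : NNReal, ∀ x ∈ cube, ∀ y, μ (x + y) ≤ K * μ y ∧ μ y ≤ K * μ (x + y) := by
  obtain ⟨hcont, hsymm, -, -⟩ := hω
  obtain ⟨hμ0, C₀, hC₀, hmod⟩ := hμ
  obtain ⟨Ω, hΩ⟩ := (isCompact_Icc (a := (0 : Fin d → ℝ)) (b := 1)).bddAbove_image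
    hcont.continuousOn
  have hbound : ∀ x ∈ cube, C₀ * ω x ≤ (C₀ * Ω).toNNReal := fun x hx =>
    (mul_le_mul_of_nonneg_left (hΩ ⟨x, hx, rfl⟩) hC₀.le).trans (Real.le_coe_toNNReal _)
  refine ⟨(C₀ * Ω).toNNReal, fun x hx y => ⟨?_, ?_⟩⟩
  · exact (hmod x y).trans (mul_le_mul_of_nonneg_right (hbound x hx) (hμ0 y))
  · have := hmod (-x) (x + y)
    rw [neg_add_cancel_left, hsymm] at this
    exact this.trans (mul_le_mul_of_nonneg_right (hbound x hx) (hμ0 _))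

/-- The restriction of a weight on `ℝ^d` to the lattice `ℤ^d`. -/
noncomputable def latticeWeight (μ : (Fin d → ℝ) → ℝ) (k : Fin d → ℤ) : ℝ≥0∞ :=
  ENNReal.ofReal (μ (zc k))

theorem IsModerate.exists_LpW_equiv_boxNorm {ω μ : (Fin d → ℝ) → ℝ} (hω : IsWeight ω)
    (hμ : IsModerate ω μ) :
    ∃ K ≠ ∞, ∀ s f,
      LpW s μ f ≤ K * eLpNorm (fun k => boxNorm s f k * latticeWeight μ k) s .count ∧
      eLpNorm (fun k => boxNorm s f k * latticeWeight μ k) s .count ≤ K * LpW s μ f := by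
  obtain ⟨K, hK⟩ := hμ.exists_comparable_on_cube hω
  have henorm (x : Fin d → ℝ) : ‖μ x‖ₑ = ENNReal.ofReal (μ x) := Real.enorm_of_nonneg (hμ.1 x)
  have hweight (s : ℝ≥0∞) (f : (Fin d → ℝ) → ℂ) (k : Fin d → ℤ) :
      boxNorm s f k * latticeWeight μ k =
        eLpNorm (fun x => μ (zc k) • f (x + zc k)) s (volume.restrict cube) := by
    rw [mul_comm, latticeWeight, ← henorm]
    exact (eLpNorm_const_smul (μ (zc k)) (fun x => f (x + zc k)) s _).symm
  have compare {s : ℝ≥0∞} {F G : (Fin d → ℝ) → ℂ} (hFG : ∀ x ∈ cube, ‖F x‖ₑ ≤ K * ‖G x‖ₑ) :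
      eLpNorm F s (volume.restrict cube) ≤ K * eLpNorm G s (volume.restrict cube) :=
    eLpNorm_le_nnreal_smul_eLpNorm_of_ae_le_mul' (ae_restrict_of_forall_mem measurableSet_Icc hFG) s
  have hscale {a b : ℝ} (hab : a ≤ K * b) (z : ℂ) :
      ENNReal.ofReal a * ‖z‖ₑ ≤ K * (ENNReal.ofReal b * ‖z‖ₑ) := by
    rw [← mul_assoc, ← ofReal_coe_nnreal, ← ofReal_mul K.coe_nonneg]
    gcongr
  refine ⟨K, coe_ne_top, fun s f => ?_⟩
  simp only [LpW, eLpNorm_eq_eLpNorm_boxNorm, hweight,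
    ← eLpNorm_const_mul_ennreal (K : ℝ≥0∞) AEMeasurable.of_discrete]
  refine ⟨eLpNorm_mono_enorm fun k => compare fun x hx => ?_,
    eLpNorm_mono_enorm fun k => compare fun x hx => ?_⟩
  · simpa only [enorm_smul, henorm] using hscale (hK x hx (zc k)).1 _
  · simpa only [enorm_smul, henorm] using hscale (hK x hx (zc k)).2 _

end Boxes

section Synthesis

variable {d r : ℕ}

/-- The values of the generators on the coset `x + ℤ^d`. -/
def cosetValues (Φ : Fin r → (Fin d → ℝ) → ℂ) (x : Fin d → ℝ) : Fin r → (Fin d → ℤ) → ℂ :=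
  fun i l => Φ i (x + zc l)

/-- The discrete synthesis operator with generators `ψ`: the restriction of `SynOp Φ c` to the
coset `x + ℤ^d` is obtained with `ψ = cosetValues Φ x`. -/
noncomputable def cosetSyn (ψ c : Fin r → (Fin d → ℤ) → ℂ) (k : Fin d → ℤ) : ℂ :=
  ∑ i, ∑' j, c i j * ψ i (k - j)

/-- The total size, weighted by `m`, of the coefficients at a lattice point. -/
noncomputable def coeffSize (m : (Fin d → ℤ) → ℝ≥0∞) (c : Fin r → (Fin d → ℤ) → ℂ)
    (j : Fin d → ℤ) : ℝ≥0∞ :=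
  ∑ i, ‖c i j‖ₑ * m j

/-- The sum over the generators of their local suprema on the boxes `l + [0,1]^d`. -/
noncomputable def totalAmal (Φ : Fin r → (Fin d → ℝ) → ℂ) (l : Fin d → ℤ) : ℝ≥0∞ :=
  ∑ i, amal (Φ i) l

/-- The matrix of `cosetSyn ψ`, conjugated by the weight `m`, is dominated entrywise by convolution
with `h`. The factor `m j⁻¹` of the conjugation is moved to the other side. -/
def IsDominated (m h : (Fin d → ℤ) → ℝ≥0∞) (ψ : Fin r → (Fin d → ℤ) → ℂ) : Prop :=
  ∀ i k j, ‖ψ i (k - j)‖ₑ * m k ≤ h (k - j) * m j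

theorem SynOp_add_zc (Φ : Fin r → (Fin d → ℝ) → ℂ) (c : Fin r → (Fin d → ℤ) → ℂ)
    (x : Fin d → ℝ) (k : Fin d → ℤ) :
    SynOp Φ c (x + zc k) = cosetSyn (cosetValues Φ x) c k := by
  simp only [SynOp, cosetSyn, cosetValues, zc_sub, add_sub_assoc]

variable {m h M b : (Fin d → ℤ) → ℝ≥0∞} {ψ ψ' c : Fin r → (Fin d → ℤ) → ℂ} {k : Fin d → ℤ}

theorem IsDominated.of_enorm_le (hM : ∀ k j, m k ≤ M (k - j) * m j)
    (hψ : ∀ i l, ‖ψ i l‖ₑ ≤ b l) : IsDominated m (fun l => M l * b l) ψ := fun i k j => by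
  calc ‖ψ i (k - j)‖ₑ * m k ≤ b (k - j) * (M (k - j) * m j) := mul_le_mul' (hψ i _) (hM k j)
    _ = M (k - j) * b (k - j) * m j := by ring

theorem IsDominated.sum_tsum_enorm_mul_le (hψ : IsDominated m h ψ)
    (c : Fin r → (Fin d → ℤ) → ℂ) (k : Fin d → ℤ) :
    (∑ i, ∑' j, ‖c i j * ψ i (k - j)‖ₑ) * m k ≤ ∑' j, h (k - j) * coeffSize m c j := by
  rw [← Summable.tsum_finsetSum fun i _ => ENNReal.summable, ← ENNReal.tsum_mul_right]
  refine ENNReal.tsum_le_tsum fun j => ?_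
  rw [coeffSize, Finset.sum_mul, Finset.mul_sum]
  refine Finset.sum_le_sum fun i _ => ?_
  calc ‖c i j * ψ i (k - j)‖ₑ * m k = ‖c i j‖ₑ * (‖ψ i (k - j)‖ₑ * m k) := by
        rw [enorm_mul, mul_assoc]
    _ ≤ ‖c i j‖ₑ * (h (k - j) * m j) := mul_le_mul_right (hψ i k j) _
    _ = h (k - j) * (‖c i j‖ₑ * m j) := mul_left_comm _ _ _

theorem IsDominated.enorm_cosetSyn_mul_le (hψ : IsDominated m h ψ)
    (c : Fin r → (Fin d → ℤ) → ℂ) (k : Fin d → ℤ) :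
    ‖cosetSyn ψ c k‖ₑ * m k ≤ ∑' j, h (k - j) * coeffSize m c j := by
  refine le_trans ?_ (hψ.sum_tsum_enorm_mul_le c k)
  gcongr
  exact (enorm_sum_le _ _).trans (Finset.sum_le_sum fun i _ => enorm_tsum_le_tsum_enorm)

theorem IsDominated.summable (hψ : IsDominated m h ψ) (hm0 : m k ≠ 0)
    (hfin : ∑' j, h (k - j) * coeffSize m c j ≠ ∞) (i : Fin r) :
    Summable fun j => c i j * ψ i (k - j) := by
  refine Summable.of_enorm fun htop => hfin (top_unique ?_)
  have hsum : ∑ i, ∑' j, ‖c i j * ψ i (k - j)‖ₑ = ∞ :=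
    ENNReal.sum_eq_top.2 ⟨i, Finset.mem_univ _, htop⟩
  simpa only [hsum, ENNReal.top_mul hm0] using hψ.sum_tsum_enorm_mul_le c k

theorem coeffSize_smul (m : (Fin d → ℤ) → ℝ≥0∞) (w : (Fin d → ℤ) → ℝ)
    (c : Fin r → (Fin d → ℤ) → ℂ) (j : Fin d → ℤ) :
    coeffSize m (fun i j => w j • c i j) j = ‖w j‖ₑ * coeffSize m c j := by
  simp only [coeffSize, enorm_smul, mul_assoc, Finset.mul_sum]

theorem tsum_mul_coeffSize_smul_ne_top {w : (Fin d → ℤ) → ℝ} (hw : ∑' l, ‖w l‖ₑ ≠ ∞)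
    (hfin : ∑' j, h (k - j) * coeffSize m c j ≠ ∞) :
    ∑' j, h (k - j) * coeffSize m (fun i j => w j • c i j) j ≠ ∞ := by
  refine ne_top_of_le_ne_top (ENNReal.mul_ne_top hw hfin) ?_
  rw [← ENNReal.tsum_mul_left]
  refine ENNReal.tsum_le_tsum fun j => ?_
  rw [coeffSize_smul, mul_left_comm]
  gcongr
  exact ENNReal.le_tsum j

theorem cosetSyn_smul (w : (Fin d → ℤ) → ℝ)
    (hwc : ∀ i, Summable fun j => w j • c i j * ψ i (k - j))
    (hc : ∀ i, Summable fun j => c i j * ψ i (k - j)) :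
    cosetSyn ψ (fun i j => w j • c i j) k =
      w k • cosetSyn ψ c k + cosetSyn ψ (fun i j => (w j - w k) • c i j) k := by
  simp only [cosetSyn, Finset.smul_sum, ← Finset.sum_add_distrib]
  refine Finset.sum_congr rfl fun i _ => ?_
  have hdiff := (hwc i).tsum_sub ((hc i).const_smul (w k))
  rw [(hc i).tsum_const_smul] at hdiff
  simp only [sub_smul, sub_mul, smul_mul_assoc] at hdiff ⊢
  rw [hdiff, add_sub_cancel]

theorem cosetSyn_sub (hψ : ∀ i, Summable fun j => c i j * ψ i (k - j))
    (hψ' : ∀ i, Summable fun j => c i j * ψ' i (k - j)) :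
    cosetSyn (ψ - ψ') c k = cosetSyn ψ c k - cosetSyn ψ' c k := by
  simp only [cosetSyn, ← Finset.sum_sub_distrib, ← (hψ _).tsum_sub (hψ' _), Pi.sub_apply, mul_sub]

variable {Φ : Fin r → (Fin d → ℝ) → ℂ}

theorem amal_mul_le {f : (Fin d → ℝ) → ℂ} {a B : ℝ≥0∞}
    (hf : ∀ᵐ x ∂volume.restrict cube, ‖f (x + zc k)‖ₑ * a ≤ B) : amal f k * a ≤ B := by
  rw [amal, mul_comm, ← ENNReal.essSup_const_mul]
  exact essSup_le_of_ae_le _ (hf.mono fun x hx => (mul_comm _ _).trans_le hx)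

theorem ae_enorm_cosetValues_le (Φ : Fin r → (Fin d → ℝ) → ℂ) :
    ∀ᵐ x ∂volume.restrict cube, ∀ i l, ‖cosetValues Φ x i l‖ₑ ≤ amal (Φ i) l :=
  ae_all_iff.2 fun _ => ae_all_iff.2 fun _ => ENNReal.ae_le_essSup _

theorem amal_le_totalAmal (Φ : Fin r → (Fin d → ℝ) → ℂ) (i : Fin r) (l : Fin d → ℤ) :
    amal (Φ i) l ≤ totalAmal Φ l :=
  Finset.single_le_sum (f := fun i => amal (Φ i) l) (fun _ _ => zero_le) (Finset.mem_univ i)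

theorem ae_isDominated_cosetValues (hM : ∀ k j, m k ≤ M (k - j) * m j)
    (Φ : Fin r → (Fin d → ℝ) → ℂ) :
    ∀ᵐ x ∂volume.restrict cube,
      IsDominated m (fun l => M l * totalAmal Φ l) (cosetValues Φ x) := by
  filter_upwards [ae_enorm_cosetValues_le Φ] with x hx
  exact .of_enorm_le hM fun i l => (hx i l).trans (amal_le_totalAmal Φ i l)

theorem amal_SynOp_mul_le (hΦ : ∀ᵐ x ∂volume.restrict cube, IsDominated m h (cosetValues Φ x))
    (c : Fin r → (Fin d → ℤ) → ℂ) (k : Fin d → ℤ) :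
    amal (SynOp Φ c) k * m k ≤ ∑' j, h (k - j) * coeffSize m c j := by
  refine amal_mul_le ?_
  filter_upwards [hΦ] with x hx
  rw [SynOp_add_zc]
  exact hx.enorm_cosetSyn_mul_le c k

theorem amal_SynOp_smul_mul_le
    (hΦ : ∀ᵐ x ∂volume.restrict cube, IsDominated m h (cosetValues Φ x)) (hm0 : m k ≠ 0)
    (hc : ∑' j, h (k - j) * coeffSize m c j ≠ ∞) {w : (Fin d → ℤ) → ℝ} (hw : ∑' l, ‖w l‖ₑ ≠ ∞) :
    amal (SynOp Φ fun i j => w j • c i j) k * m k ≤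
      ‖w k‖ₑ * (amal (SynOp Φ c) k * m k) +
        ∑' j, h (k - j) * (‖w j - w k‖ₑ * coeffSize m c j) := by
  refine amal_mul_le ?_
  have hsup : ∀ᵐ x ∂volume.restrict cube, ‖SynOp Φ c (x + zc k)‖ₑ ≤ amal (SynOp Φ c) k :=
    ENNReal.ae_le_essSup _
  filter_upwards [hΦ, hsup] with x hx hxsup
  rw [SynOp_add_zc, cosetSyn_smul w (hx.summable hm0 (tsum_mul_coeffSize_smul_ne_top hw hc))
    (hx.summable hm0 hc), ← SynOp_add_zc]
  have hcomm := hx.enorm_cosetSyn_mul_le (fun i j => (w j - w k) • c i j) k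
  simp only [coeffSize_smul m fun j => w j - w k] at hcomm
  refine (mul_le_mul_left (enorm_add_le _ _) _).trans ?_
  rw [add_mul, enorm_smul, mul_assoc]
  gcongr

theorem IsDominated.enorm_SynOp_sub_le {x y : Fin d → ℝ} {h' : (Fin d → ℤ) → ℝ≥0∞}
    (hxy : IsDominated m h' (cosetValues Φ x - cosetValues Φ y))
    (hx : IsDominated m h (cosetValues Φ x)) (hy : IsDominated m h (cosetValues Φ y))
    (hm0 : m k ≠ 0) (hmt : m k ≠ ∞) (hfin : ∑' j, h (k - j) * coeffSize m c j ≠ ∞) :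
    ‖SynOp Φ c (x + zc k) - SynOp Φ c (y + zc k)‖ₑ ≤
      (∑' j, h' (k - j) * coeffSize m c j) / m k := by
  rw [ENNReal.le_div_iff_mul_le (.inl hm0) (.inl hmt), SynOp_add_zc, SynOp_add_zc,
    ← cosetSyn_sub (hx.summable hm0 hfin) (hy.summable hm0 hfin)]
  exact hxy.enorm_cosetSyn_mul_le c k

end Synthesis

section LocalOscillation

theorem exists_forall_ae_le_measure_ball {Y : Type*} [PseudoMetricSpace Y] [MeasurableSpace Y]
    {ρ : Measure Y} {K : Set Y} (hK : TotallyBounded K) (hρ : ∀ᵐ z ∂ρ, z ∈ K) {ε : ℝ}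
    (hε : 0 < ε) :
    ∃ δ ≠ 0, ∀ᵐ z ∂ρ, δ ≤ ρ (Metric.ball z ε) := by
  classical
  obtain ⟨t, htfin, hcover⟩ := Metric.totallyBounded_iff.1 hK (ε / 2) (half_pos hε)
  refine ⟨(htfin.toFinset.filter fun y => ρ (Metric.ball y (ε / 2)) ≠ 0).inf
    fun y => ρ (Metric.ball y (ε / 2)), ?_, ?_⟩
  · rw [← pos_iff_ne_zero, Finset.lt_inf_iff ENNReal.zero_lt_top]
    exact fun y hy => pos_iff_ne_zero.2 (Finset.mem_filter.1 hy).2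
  · have hnull : ∀ᵐ z ∂ρ, ∀ y ∈ t, ρ (Metric.ball y (ε / 2)) = 0 → z ∉ Metric.ball y (ε / 2) :=
      (ae_ball_iff htfin.countable).2 fun y _ => by
        by_cases hy : ρ (Metric.ball y (ε / 2)) = 0
        · exact (measure_eq_zero_iff_ae_notMem.1 hy).mono fun z hz _ => hz
        · exact .of_forall fun z h => absurd h hy
    filter_upwards [hρ, hnull] with z hz hzt
    obtain ⟨y, hyt, hzy⟩ := Set.mem_iUnion₂.1 (hcover hz)
    have hy0 : ρ (Metric.ball y (ε / 2)) ≠ 0 := fun h => hzt y hyt h hzy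
    refine (Finset.inf_le (Finset.mem_filter.2 ⟨htfin.mem_toFinset.2 hyt, hy0⟩)).trans
      (measure_mono fun x hx => ?_)
    calc dist x z ≤ dist x y + dist z y := dist_triangle_right x z y
      _ < ε / 2 + ε / 2 := add_lt_add hx hzy
      _ = ε := add_halves ε

theorem mul_measure_le_eLpNorm {X F : Type*} [MeasurableSpace X] {ν : Measure X}
    [IsProbabilityMeasure ν] [NormedAddCommGroup F] {f : X → F} {E : Set X} {u q : ℝ≥0∞}
    (hq : 1 ≤ q) (hE : NullMeasurableSet E ν) (hf : ∀ᵐ y ∂ν, y ∈ E → u ≤ ‖f y‖ₑ) :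
    u * ν E ≤ eLpNorm f q ν := by
  calc u * ν E = eLpNorm (E.indicator fun _ => u) 1 ν := by
        rw [eLpNorm_one_eq_lintegral_enorm]
        simp only [enorm_eq_self]
        rw [lintegral_indicator_const₀ hE]
    _ ≤ eLpNorm (E.indicator fun _ => u) q ν :=
        eLpNorm_le_eLpNorm_of_exponent_le hq (aemeasurable_const.indicator₀ hE).aestronglyMeasurable
    _ ≤ eLpNorm f q ν := by
        refine eLpNorm_mono_enorm_ae (hf.mono fun y hy => ?_)
        by_cases hyE : y ∈ E
        · simpa [hyE] using hy hyE
        · simp [hyE]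

theorem exists_finset_tsum_ite_le {ι : Type*} [DecidableEq ι] {M a : ι → ℝ≥0∞}
    (hM : ∀ l, M l ≠ ∞) (ha : ∑' l, M l * a l ≠ ∞) {θ : ℝ≥0∞} (hθ : θ ≠ 0) :
    ∃ S : Finset ι, ∃ ε : NNReal, 0 < ε ∧
      ∑' l, M l * (if l ∈ S then (ε : ℝ≥0∞) else a l) ≤ θ := by
  have hθ2 : 0 < θ / 2 := ENNReal.half_pos hθ
  obtain ⟨S, hS⟩ := ((tendsto_order.1 (ENNReal.tendsto_tsum_compl_atTop_zero ha)).2 _ hθ2).exists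
  obtain ⟨ε, hε0, hε⟩ := ENNReal.exists_nnreal_pos_mul_lt
    (ENNReal.sum_ne_top.2 fun l (_ : l ∈ S) => hM l) hθ2.ne'
  refine ⟨S, ε, hε0, ?_⟩
  rw [← ENNReal.sum_add_tsum_compl S]
  calc _ = ε * ∑ l ∈ S, M l + ∑' l : {l // l ∉ S}, M l * a l := by
        congr 1
        · rw [Finset.mul_sum]
          exact Finset.sum_congr rfl fun l hl => by rw [if_pos hl, mul_comm]
        · exact tsum_congr fun l => congrArg (M l * ·) (if_neg l.2)
    _ ≤ θ / 2 + θ / 2 := add_le_add hε.le hS.le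
    _ = θ := ENNReal.add_halves θ

variable {d r : ℕ} {Φ : Fin r → (Fin d → ℝ) → ℂ}

theorem aemeasurable_translate {f : (Fin d → ℝ) → ℂ} (hf : AEStronglyMeasurable f volume)
    (a : Fin d → ℝ) : AEMeasurable (fun x => f (x + a)) volume :=
  (hf.comp_measurePreserving (measurePreserving_add_right volume a)).aemeasurable

theorem exists_small_oscillation_on_cube (hm : ∀ i, AEStronglyMeasurable (Φ i) volume)
    (hfin : ∀ i l, amal (Φ i) l ≠ ∞) (S : Finset (Fin d → ℤ)) {ε : NNReal} (hε : 0 < ε) :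
    ∃ δ ≠ 0, ∀ᵐ x ∂volume.restrict cube, ∃ E, NullMeasurableSet E (volume.restrict cube) ∧
      δ ≤ volume.restrict cube E ∧
      ∀ y ∈ E, ∀ i, ∀ l ∈ S, ‖cosetValues Φ x i l - cosetValues Φ y i l‖ₑ ≤ ε := by
  let Ψ (x : Fin d → ℝ) (t : Fin r × S) : ℂ := cosetValues Φ x t.1 t.2
  have hΨ : AEMeasurable Ψ (volume.restrict cube) :=
    aemeasurable_pi_lambda _ fun t => (aemeasurable_translate (hm t.1) (zc t.2.1)).restrict
  let K : Set (Fin r × S → ℂ) :=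
    Set.univ.pi fun t => Metric.closedBall 0 (amal (Φ t.1) t.2).toReal
  have hK : TotallyBounded K := (isCompact_univ_pi fun t => isCompact_closedBall _ _).totallyBounded
  have hΨK : ∀ᵐ z ∂(volume.restrict cube).map Ψ, z ∈ K := by
    have hKmeas : MeasurableSet K := .univ_pi fun _ => measurableSet_closedBall
    refine (ae_map_iff (p := (· ∈ K)) hΨ hKmeas).2 ?_
    filter_upwards [ae_enorm_cosetValues_le Φ] with x hx t _
    rw [mem_closedBall_zero_iff, ← toReal_enorm]
    exact ENNReal.toReal_mono (hfin _ _) (hx _ _)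
  obtain ⟨δ, hδ, hball⟩ := exists_forall_ae_le_measure_ball hK hΨK (NNReal.coe_pos.2 hε)
  refine ⟨δ, hδ, ?_⟩
  filter_upwards [ae_of_ae_map hΨ hball] with x hx
  rw [Measure.map_apply_of_aemeasurable hΨ measurableSet_ball] at hx
  refine ⟨_, hΨ.nullMeasurableSet_preimage measurableSet_ball, hx, fun y hy i l hl => ?_⟩
  have hdist := (dist_le_pi_dist (Ψ y) (Ψ x) (i, ⟨l, hl⟩)).trans (Metric.mem_ball.1 hy).le
  rw [dist_comm, dist_eq_norm] at hdist
  exact enorm_le_coe.2 hdist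

variable {m M : (Fin d → ℤ) → ℝ≥0∞}

theorem exists_isDominated_cosetValues_sub (hm : ∀ i, AEStronglyMeasurable (Φ i) volume)
    (hM0 : ∀ l, M l ≠ 0) (hMt : ∀ l, M l ≠ ∞) (hM : ∀ k j, m k ≤ M (k - j) * m j)
    (hΦ : ∑' l, M l * totalAmal Φ l ≠ ∞) {θ : ℝ≥0∞} (hθ : θ ≠ 0) :
    ∃ h : (Fin d → ℤ) → ℝ≥0∞, ∑' l, h l ≤ θ ∧ ∃ δ ≠ 0, ∀ᵐ x ∂volume.restrict cube,
      ∃ E, NullMeasurableSet E (volume.restrict cube) ∧ δ ≤ volume.restrict cube E ∧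
        ∀ᵐ y ∂volume.restrict cube, y ∈ E →
          IsDominated m h (cosetValues Φ x - cosetValues Φ y) := by
  classical
  have hfin (i : Fin r) (l : Fin d → ℤ) : amal (Φ i) l ≠ ∞ :=
    ne_top_of_le_ne_top (ENNReal.lt_top_of_mul_ne_top_right
      (ENNReal.ne_top_of_tsum_ne_top hΦ l) (hM0 l)).ne (amal_le_totalAmal Φ i l)
  have hΦ2 : ∑' l, M l * (2 * totalAmal Φ l) ≠ ∞ := by
    simp only [mul_left_comm _ (2 : ℝ≥0∞), ENNReal.tsum_mul_left]
    exact ENNReal.mul_ne_top ofNat_ne_top hΦ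
  obtain ⟨S, ε, hε, hsum⟩ := exists_finset_tsum_ite_le hMt hΦ2 hθ
  obtain ⟨δ, hδ, hosc⟩ := exists_small_oscillation_on_cube hm hfin S hε
  refine ⟨_, hsum, δ, hδ, ?_⟩
  filter_upwards [hosc, ae_enorm_cosetValues_le Φ] with x ⟨E, hE, hδE, hxE⟩ hx
  refine ⟨E, hE, hδE, ?_⟩
  filter_upwards [ae_enorm_cosetValues_le Φ] with y hy hyE
  refine .of_enorm_le hM fun i l => ?_
  split_ifs with hl
  · exact hxE y hyE i l hl
  · calc ‖cosetValues Φ x i l - cosetValues Φ y i l‖ₑ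
        ≤ ‖cosetValues Φ x i l‖ₑ + ‖cosetValues Φ y i l‖ₑ := enorm_sub_le
      _ ≤ totalAmal Φ l + totalAmal Φ l := by
          gcongr
          · exact (hx i l).trans (amal_le_totalAmal Φ i l)
          · exact (hy i l).trans (amal_le_totalAmal Φ i l)
      _ = 2 * totalAmal Φ l := (two_mul _).symm

theorem exists_amal_SynOp_mul_le (hm : ∀ i, AEStronglyMeasurable (Φ i) volume)
    (hm0 : ∀ k, m k ≠ 0) (hmt : ∀ k, m k ≠ ∞)
    (hM0 : ∀ l, M l ≠ 0) (hMt : ∀ l, M l ≠ ∞) (hM : ∀ k j, m k ≤ M (k - j) * m j)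
    (hΦ : ∑' l, M l * totalAmal Φ l ≠ ∞) {θ : ℝ≥0∞} (hθ : θ ≠ 0) :
    ∃ A ≠ ∞, ∃ h : (Fin d → ℤ) → ℝ≥0∞, ∑' l, h l ≤ θ ∧ ∀ q ≥ 1, ∀ c k,
      ∑' j, M (k - j) * totalAmal Φ (k - j) * coeffSize m c j ≠ ∞ →
      amal (SynOp Φ c) k * m k ≤
        A * (boxNorm q (SynOp Φ c) k * m k) + ∑' j, h (k - j) * coeffSize m c j := by
  obtain ⟨h, hh, δ, hδ, hosc⟩ := exists_isDominated_cosetValues_sub hm hM0 hMt hM hΦ hθ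
  refine ⟨δ⁻¹, ENNReal.inv_ne_top.2 hδ, h, hh, fun q hq c k hfin => amal_mul_le ?_⟩
  have hdom := ae_isDominated_cosetValues hM Φ
  filter_upwards [hosc, hdom] with x ⟨E, hE, hδE, hxE⟩ hx
  set f := SynOp Φ c
  set T := ∑' j, h (k - j) * coeffSize m c j
  have hclose : ∀ᵐ y ∂volume.restrict cube, y ∈ E →
      ‖f (x + zc k)‖ₑ - T / m k ≤ ‖f (y + zc k)‖ₑ := by
    filter_upwards [hxE, hdom] with y hxy hy hyE
    have hdiff : ‖f (x + zc k) - f (y + zc k)‖ₑ ≤ T / m k :=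
      (hxy hyE).enorm_SynOp_sub_le hx hy (hm0 k) (hmt k) hfin
    rw [tsub_le_iff_right]
    calc ‖f (x + zc k)‖ₑ = ‖f (y + zc k) + (f (x + zc k) - f (y + zc k))‖ₑ := by
          rw [add_sub_cancel]
      _ ≤ ‖f (y + zc k)‖ₑ + T / m k := (enorm_add_le _ _).trans (by gcongr)
  have hmarkov : (‖f (x + zc k)‖ₑ - T / m k) * δ ≤ boxNorm q f k :=
    (mul_le_mul_right hδE _).trans (mul_measure_le_eLpNorm hq hE hclose)
  have hδt : δ ≠ ∞ := ne_top_of_le_ne_top (measure_ne_top _ _) hδE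
  rw [← ENNReal.le_div_iff_mul_le (.inl hδ) (.inl hδt), tsub_le_iff_right] at hmarkov
  calc ‖f (x + zc k)‖ₑ * m k ≤ (boxNorm q f k / δ + T / m k) * m k := by gcongr
    _ = δ⁻¹ * (boxNorm q f k * m k) + T := by
        rw [add_mul, ENNReal.div_mul_cancel (hm0 k) (hmt k), div_eq_mul_inv, mul_right_comm,
          mul_comm]

end LocalOscillation

section Transfer

variable {d r : ℕ} {ω μ : (Fin d → ℝ) → ℝ} {Φ : Fin r → (Fin d → ℝ) → ℂ} {p q : ℝ≥0∞}

theorem lpW_eq_eLpNorm (hp : p ≠ 0) (c : (Fin d → ℤ) → ℂ) :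
    lpW p μ c = eLpNorm (fun j => ‖c j‖ₑ * latticeWeight μ j) p .count := by
  rcases eq_or_ne p ∞ with rfl | hp'
  · simp only [lpW, if_true, eLpNorm_exponent_top, eLpNormEssSup_count, enorm_eq_self]
    rfl
  · simp only [lpW, if_neg hp', eLpNorm_eq_lintegral_rpow_enorm_toReal hp hp', lintegral_count,
      enorm_eq_self]
    rfl

theorem lpW_le_eLpNorm_coeffSize (hp : p ≠ 0) (c : Fin r → (Fin d → ℤ) → ℂ) (i : Fin r) :
    lpW p μ (c i) ≤ eLpNorm (coeffSize (latticeWeight μ) c) p .count := by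
  rw [lpW_eq_eLpNorm hp]
  exact eLpNorm_mono_enorm fun j => Finset.single_le_sum
    (f := fun i => ‖c i j‖ₑ * latticeWeight μ j) (fun _ _ => zero_le) (Finset.mem_univ i)

theorem eLpNorm_coeffSize_le (hp : 1 ≤ p) (c : Fin r → (Fin d → ℤ) → ℂ) :
    eLpNorm (coeffSize (latticeWeight μ) c) p .count ≤ ∑ i, lpW p μ (c i) := by
  simp only [lpW_eq_eLpNorm (one_pos.trans_le hp).ne']
  have hsum : coeffSize (latticeWeight μ) c = ∑ i, fun j => ‖c i j‖ₑ * latticeWeight μ j := by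
    ext j
    simp only [coeffSize, Finset.sum_apply]
  rw [hsum]
  exact eLpNorm_sum_le (fun _ _ => .of_discrete) hp

theorem tsum_convolution_ne_top {h g : (Fin d → ℤ) → ℝ≥0∞} (hp : 1 ≤ p) (hh : ∑' l, h l ≠ ∞)
    (hg : eLpNorm g p .count ≠ ∞) (k : Fin d → ℤ) : ∑' j, h (k - j) * g j ≠ ∞ :=
  ne_top_of_le_ne_top (ENNReal.mul_ne_top hh hg)
    ((enorm_le_eLpNorm_count (fun k => ∑' j, h (k - j) * g j) k (one_pos.trans_le hp).ne').trans
      (eLpNorm_convolution_le hp h g))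

theorem IsModerate.exists_kernel (hμ : IsModerate ω μ) (hμ0 : ∀ x, μ x ≠ 0) :
    ∃ M : (Fin d → ℤ) → ℝ≥0∞, (∀ l, M l ≠ 0) ∧ (∀ l, M l ≠ ∞) ∧
      (∀ k j, latticeWeight μ k ≤ M (k - j) * latticeWeight μ j) ∧
      ((∀ i, WW 1 ω (Φ i) < ∞) → ∑' l, M l * totalAmal Φ l ≠ ∞) := by
  obtain ⟨hμnonneg, C₀, hC₀, hmod⟩ := hμ
  have hμpos (x : Fin d → ℝ) : 0 < μ x := (hμnonneg x).lt_of_ne' (hμ0 x)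
  have hpos (x : Fin d → ℝ) : 0 < C₀ * ω x :=
    pos_of_mul_pos_left ((hμpos (x + 0)).trans_le (hmod x 0)) (hμnonneg 0)
  refine ⟨fun l => ENNReal.ofReal (C₀ * ω (zc l)), fun l => (ofReal_pos.2 (hpos _)).ne',
    fun l => ofReal_ne_top, fun k j => ?_, fun hΦ => ?_⟩
  · rw [latticeWeight, latticeWeight, ← ofReal_mul (hpos _).le, zc_sub]
    exact ofReal_le_ofReal (by simpa only [sub_add_cancel] using hmod (zc k - zc j) (zc j))
  · have hterm (l : Fin d → ℤ) : ENNReal.ofReal (C₀ * ω (zc l)) * totalAmal Φ l =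
        ENNReal.ofReal C₀ * ∑ i, amal (Φ i) l * ENNReal.ofReal (ω (zc l)) := by
      rw [ofReal_mul hC₀.le, totalAmal, ← Finset.sum_mul, mul_assoc, mul_comm (∑ i, _)]
    have hfin (i : Fin r) : ∑' l, amal (Φ i) l * ENNReal.ofReal (ω (zc l)) ≠ ∞ := by
      simpa [WW] using (hΦ i).ne
    simp only [hterm, ENNReal.tsum_mul_left,
      Summable.tsum_finsetSum fun _ _ => ENNReal.summable]
    exact ENNReal.mul_ne_top ofReal_ne_top (ENNReal.sum_ne_top.2 fun i _ => hfin i)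

variable {h M : (Fin d → ℤ) → ℝ≥0∞}

theorem IsModerate.exists_LpW_SynOp_le (hω : IsWeight ω) (hμ : IsModerate ω μ)
    (hh : ∑' l, h l ≠ ∞)
    (hΦ : ∀ᵐ x ∂volume.restrict cube, IsDominated (latticeWeight μ) h (cosetValues Φ x))
    (hq : 1 ≤ q) :
    ∃ B ≠ ∞, ∀ c, LpW q μ (SynOp Φ c) ≤ B * ∑ i, lpW q μ (c i) := by
  obtain ⟨K, hK, hequiv⟩ := hμ.exists_LpW_equiv_boxNorm hω
  refine ⟨K * ∑' l, h l, ENNReal.mul_ne_top hK hh, fun c => ?_⟩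
  have hbox (k : Fin d → ℤ) : boxNorm q (SynOp Φ c) k * latticeWeight μ k ≤
      ∑' j, h (k - j) * coeffSize (latticeWeight μ) c j :=
    (mul_le_mul_left (boxNorm_le_amal q _ k) _).trans (amal_SynOp_mul_le hΦ c k)
  calc LpW q μ (SynOp Φ c)
      ≤ K * eLpNorm (fun k => boxNorm q (SynOp Φ c) k * latticeWeight μ k) q .count :=
        (hequiv q _).1
    _ ≤ K * ((∑' l, h l) * eLpNorm (coeffSize (latticeWeight μ) c) q .count) := by
        gcongr
        exact (eLpNorm_mono_enorm hbox).trans (eLpNorm_convolution_le hq h _)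
    _ ≤ K * ((∑' l, h l) * ∑ i, lpW q μ (c i)) := by
        gcongr
        exact eLpNorm_coeffSize_le hq c
    _ = K * (∑' l, h l) * ∑ i, lpW q μ (c i) := (mul_assoc _ _ _).symm

theorem Stable.exists_eLpNorm_coeffSize_le (hst : Stable p μ Φ) (hp : 1 ≤ p) :
    ∃ C ≠ ∞, ∀ c, eLpNorm (coeffSize (latticeWeight μ) c) p .count ≠ ∞ →
      eLpNorm (coeffSize (latticeWeight μ) c) p .count ≤ C * LpW p μ (SynOp Φ c) := by
  obtain ⟨C, hC0, hCt, hC⟩ := hst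
  refine ⟨C, hCt.ne, fun c hc => (eLpNorm_coeffSize_le hp c).trans ?_⟩
  rw [← ENNReal.inv_mul_le_iff hC0.ne' hCt.ne]
  exact (hC c fun i =>
    (lpW_le_eLpNorm_coeffSize (one_pos.trans_le hp).ne' c i).trans_lt hc.lt_top).1

theorem eLpNorm_mul_ne_top_of_tsum_ne_top {w : (Fin d → ℤ) → ℝ} {g : (Fin d → ℤ) → ℝ≥0∞}
    (hp : 1 ≤ p) (hq : q ≠ 0) (hw : ∑' l, ‖w l‖ₑ ≠ ∞) (hg : eLpNorm g q .count ≠ ∞) :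
    eLpNorm (fun j => ‖w j‖ₑ * g j) p .count ≠ ∞ := by
  refine ne_top_of_le_ne_top (ENNReal.mul_ne_top hw hg) ((eLpNorm_count_le_tsum hp _).trans ?_)
  rw [← ENNReal.tsum_mul_right]
  gcongr with j
  exact enorm_le_eLpNorm_count g j hq

theorem Stable.exists_eLpNorm_coeffSize_le_amal (hω : IsWeight ω) (hμ : IsModerate ω μ)
    (hm0 : ∀ k, latticeWeight μ k ≠ 0) (hh : ∑' l, h l ≠ ∞)
    (hΦ : ∀ᵐ x ∂volume.restrict cube, IsDominated (latticeWeight μ) h (cosetValues Φ x))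
    (hst : Stable p μ Φ) (hp : 1 ≤ p) (hq : 1 ≤ q) :
    ∃ B ≠ ∞, ∀ c, eLpNorm (coeffSize (latticeWeight μ) c) q .count ≠ ∞ →
      eLpNorm (coeffSize (latticeWeight μ) c) q .count ≤
        B * eLpNorm (fun k => amal (SynOp Φ c) k * latticeWeight μ k) q .count := by
  obtain ⟨K, hK, hequiv⟩ := hμ.exists_LpW_equiv_boxNorm hω
  obtain ⟨C, hC, hlower⟩ := hst.exists_eLpNorm_coeffSize_le hp
  obtain ⟨B, hB, htransfer⟩ := exists_eLpNorm_le_of_forall_window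
    (fun _ => summable_exp_neg_mul_norm_pi_int (d := d)) hh hp hq (ENNReal.mul_ne_top hC hK)
  refine ⟨B, hB, fun c hc => htransfer _ _ hc fun w hw => ?_⟩
  have hwc := eLpNorm_mul_ne_top_of_tsum_ne_top hp (one_pos.trans_le hq).ne' hw hc
  simp only [← coeffSize_smul] at hwc ⊢
  have hcomm (k : Fin d → ℤ) := amal_SynOp_smul_mul_le hΦ (hm0 k)
    (tsum_convolution_ne_top hq hh hc k) hw
  rw [mul_assoc]
  calc eLpNorm (coeffSize (latticeWeight μ) fun i j => w j • c i j) p .count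
      ≤ C * (K * eLpNorm (fun k => boxNorm p (SynOp Φ fun i j => w j • c i j) k *
          latticeWeight μ k) p .count) := by
        refine (hlower _ hwc).trans ?_
        gcongr
        exact (hequiv p _).1
    _ ≤ C * (K * (_ + _)) := by
        gcongr
        refine (eLpNorm_mono_enorm fun k => ?_).trans
          (eLpNorm_add_le .of_discrete .of_discrete hp)
        exact (mul_le_mul_left (boxNorm_le_amal p _ k) _).trans (hcomm k)

theorem IsModerate.exists_eLpNorm_amal_SynOp_le (hω : IsWeight ω) (hμ : IsModerate ω μ)
    (hm : ∀ i, AEStronglyMeasurable (Φ i) volume) (hm0 : ∀ k, latticeWeight μ k ≠ 0)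
    (hM0 : ∀ l, M l ≠ 0) (hMt : ∀ l, M l ≠ ∞)
    (hM : ∀ k j, latticeWeight μ k ≤ M (k - j) * latticeWeight μ j)
    (hΦ : ∑' l, M l * totalAmal Φ l ≠ ∞) (hq : 1 ≤ q) {θ : ℝ≥0∞} (hθ : θ ≠ 0) :
    ∃ A ≠ ∞, ∀ c, eLpNorm (coeffSize (latticeWeight μ) c) q .count ≠ ∞ →
      eLpNorm (fun k => amal (SynOp Φ c) k * latticeWeight μ k) q .count ≤
        A * LpW q μ (SynOp Φ c) + θ * eLpNorm (coeffSize (latticeWeight μ) c) q .count := by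
  obtain ⟨K, hK, hequiv⟩ := hμ.exists_LpW_equiv_boxNorm hω
  obtain ⟨A, hA, h, hh, hosc⟩ :=
    exists_amal_SynOp_mul_le hm hm0 (fun _ => ofReal_ne_top) hM0 hMt hM hΦ hθ
  refine ⟨A * K, ENNReal.mul_ne_top hA hK, fun c hc => ?_⟩
  have hbox (k : Fin d → ℤ) := hosc q hq c k (tsum_convolution_ne_top hq hΦ hc k)
  refine le_trans (eLpNorm_mono_enorm (g := (fun k =>
    A * (boxNorm q (SynOp Φ c) k * latticeWeight μ k)) + fun k =>
      ∑' j, h (k - j) * coeffSize (latticeWeight μ) c j) hbox) ?_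
  refine (eLpNorm_add_le .of_discrete .of_discrete hq).trans (add_le_add ?_ ?_)
  · rw [eLpNorm_const_mul_ennreal A AEMeasurable.of_discrete, mul_assoc]
    gcongr
    exact (hequiv q _).2
  · exact (eLpNorm_convolution_le hq h _).trans (by gcongr)

theorem Stable.exists_sum_lpW_le (hω : IsWeight ω) (hμ : IsModerate ω μ)
    (hm : ∀ i, AEStronglyMeasurable (Φ i) volume) (hm0 : ∀ k, latticeWeight μ k ≠ 0)
    (hM0 : ∀ l, M l ≠ 0) (hMt : ∀ l, M l ≠ ∞)
    (hM : ∀ k j, latticeWeight μ k ≤ M (k - j) * latticeWeight μ j)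
    (hΦ : ∑' l, M l * totalAmal Φ l ≠ ∞) (hst : Stable p μ Φ) (hp : 1 ≤ p) (hq : 1 ≤ q) :
    ∃ B ≠ ∞, ∀ c, (∀ i, lpW q μ (c i) < ∞) →
      ∑ i, lpW q μ (c i) ≤ B * LpW q μ (SynOp Φ c) := by
  obtain ⟨B, hB, hamal⟩ := hst.exists_eLpNorm_coeffSize_le_amal hω hμ hm0 hΦ
    (ae_isDominated_cosetValues hM Φ) hp hq
  obtain ⟨θ, hθ0, hθ⟩ := ENNReal.exists_nnreal_pos_mul_lt hB (b := 2⁻¹) (by simp)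
  obtain ⟨A, hA, hosc⟩ := hμ.exists_eLpNorm_amal_SynOp_le hω hm hm0 hM0 hMt hM hΦ hq
    (coe_ne_zero.2 hθ0.ne')
  refine ⟨r * (2 * (B * A)), by finiteness, fun c hc => ?_⟩
  set γ := coeffSize (latticeWeight μ) c
  have hγ : eLpNorm γ q .count ≠ ∞ :=
    ne_top_of_le_ne_top (ENNReal.sum_ne_top.2 fun i _ => (hc i).ne) (eLpNorm_coeffSize_le hq c)
  have habsorb : eLpNorm γ q .count ≤ 2 * (B * (A * LpW q μ (SynOp Φ c))) := by
    refine le_two_mul_of_le_add_inv_two_mul hγ ?_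
    calc eLpNorm γ q .count
        ≤ B * (A * LpW q μ (SynOp Φ c) + θ * eLpNorm γ q .count) :=
          (hamal c hγ).trans (mul_le_mul_right (hosc c hγ) B)
      _ = B * (A * LpW q μ (SynOp Φ c)) + θ * B * eLpNorm γ q .count := by ring
      _ ≤ B * (A * LpW q μ (SynOp Φ c)) + 2⁻¹ * eLpNorm γ q .count := by gcongr
  calc ∑ i, lpW q μ (c i) ≤ ∑ _i : Fin r, 2 * (B * (A * LpW q μ (SynOp Φ c))) :=
        Finset.sum_le_sum fun i _ =>
          (lpW_le_eLpNorm_coeffSize (one_pos.trans_le hq).ne' c i).trans habsorb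
    _ = r * (2 * (B * A)) * LpW q μ (SynOp Φ c) := by
        rw [Finset.sum_const, Finset.card_univ, Fintype.card_fin, nsmul_eq_mul]
        ring

theorem Stable.of_bounds {A B : ℝ≥0∞} (hA : A ≠ ∞) (hB : B ≠ ∞)
    (hlower : ∀ c, (∀ i, lpW p μ (c i) < ∞) → ∑ i, lpW p μ (c i) ≤ A * LpW p μ (SynOp Φ c))
    (hupper : ∀ c, LpW p μ (SynOp Φ c) ≤ B * ∑ i, lpW p μ (c i)) : Stable p μ Φ := by
  have hC0 : A + B + 1 ≠ 0 := by simp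
  have hCt : A + B + 1 ≠ ∞ := by finiteness
  refine ⟨A + B + 1, pos_iff_ne_zero.2 hC0, hCt.lt_top, fun c hc => ⟨?_, ?_⟩⟩
  · rw [ENNReal.inv_mul_le_iff hC0 hCt]
    exact (hlower c hc).trans (mul_le_mul_left (le_self_add.trans le_self_add) _)
  · exact (hupper c).trans (mul_le_mul_left (le_add_self.trans le_self_add) _)

theorem IsModerate.eq_zero (hμ : IsModerate ω μ) {y : Fin d → ℝ} (hy : μ y = 0) : μ = 0 := by
  obtain ⟨hμ0, C₀, -, hmod⟩ := hμ
  ext x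
  exact le_antisymm (by simpa [hy] using hmod (x - y) y) (hμ0 x)

theorem stable_zero_weight (hp : p ≠ 0) (Φ : Fin r → (Fin d → ℝ) → ℂ) : Stable p 0 Φ :=
  ⟨1, one_pos, one_lt_top, fun c _ => by simp [lpW_eq_eLpNorm hp, latticeWeight, LpW]⟩

end Transfer

/-- Proposition 3.6: if the synthesis operator `S_Φ` has
`ℓ^p_μ`-stability for some `p ∈ [1,∞]`, then it has `ℓ^q_μ`-stability for every
`q ∈ [1,∞]`. -/
theorem stability_transfer {d r : ℕ} (ω μ : (Fin d → ℝ) → ℝ)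
    (hω : IsWeight ω) (hμ : IsModerate ω μ)
    (Φ : Fin r → (Fin d → ℝ) → ℂ)
    (hm : ∀ i, AEStronglyMeasurable (Φ i) volume)
    (hΦ : ∀ i, WW 1 ω (Φ i) < ∞)
    (p : ℝ≥0∞) (hp : 1 ≤ p) (hst : Stable p μ Φ) :
    ∀ q : ℝ≥0∞, 1 ≤ q → Stable q μ Φ := by
  intro q hq
  by_cases hzero : ∃ y, μ y = 0
  · obtain ⟨y, hy⟩ := hzero
    rw [hμ.eq_zero hy]
    exact stable_zero_weight (one_pos.trans_le hq).ne' Φ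
  push Not at hzero
  have hm0 (k : Fin d → ℤ) : latticeWeight μ k ≠ 0 :=
    (ofReal_pos.2 ((hμ.1 (zc k)).lt_of_ne' (hzero _))).ne'
  obtain ⟨M, hM0, hMt, hM, hsum⟩ := hμ.exists_kernel (Φ := Φ) hzero
  obtain ⟨A, hA, hlower⟩ := hst.exists_sum_lpW_le hω hμ hm hm0 hM0 hMt hM (hsum hΦ) hp hq
  obtain ⟨B, hB, hupper⟩ :=
    hμ.exists_LpW_SynOp_le hω (hsum hΦ) (ae_isDominated_cosetValues hM Φ) hq
  exact .of_bounds hA hB hlower hupper
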